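/- Let G be a graph, x a vertex, S a set of vertices with x ∉ S, and suppose x is not k-linked to S. Then there exists a set C ⊆ V(G) \ {x} with |C| < k such that the connected component X of G − C containing x satisfies S ∩ X = ∅ and N_G(X) ⊆ C; in particular |N_G(X)| < k. -/

import Mathlib

open SimpleGraph

/-- A `v`–`S` fan of order `k` in `G`: `k` paths from `v` to vertices of `S`,
with distinct endpoints, pairwise intersecting only in `v`. -/
def HasFan {V : Type*} (G : SimpleGraph V) (v : V) (S : Set V) (k : ℕ) : Prop :=
  ∃ (t : Fin k → V) (p : ∀ i : Fin k, G.Walk v (t i)),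
    Function.Injective t ∧ (∀ i, (p i).IsPath) ∧ (∀ i, t i ∈ S) ∧
    ∀ i j, i ≠ j → ∀ x ∈ (p i).support, x ∈ (p j).support → x = v

/-- `S` is a vector connectivity set for `(G, r)`. -/
def VecConnSet {V : Type*} (G : SimpleGraph V) (r : V → ℕ) (S : Set V) : Prop :=
  ∀ v, v ∉ S → HasFan G v S (r v)

/-- The neighborhood `N_G(X)` of a set of vertices. -/
def setNbhd {V : Type*} (G : SimpleGraph V) (X : Set V) : Set V :=
  {u | u ∉ X ∧ ∃ x ∈ X, G.Adj x u}

/-!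
Call `C` a separator if it avoids `x` and meets every walk from `x` to `S`. If all separators have
at least `k` vertices, a fan with `n < k` paths can be enlarged by one path while keeping its ends
(Böhme, Göring, Harant). The `n` ends do not separate, so some path `R` runs from a vertex `a` of
the fan to `b ∈ S`, avoiding the ends and otherwise disjoint from the fan. If `a = x`, add `R`.
Otherwise `a` cuts the path of the fan through it into an initial part and a final part `P₂`.
Replace the target `S` by `S ∪ P₂ ∪ R` and that path by its initial part: the fan now has fewer
vertices outside the target, so by induction it can be enlarged, and the two ends of the new fan
lying on `P₂ ∪ R` can be continued disjointly along `P₂` and `R` into `S`. Since the induction is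
on the finitely many vertices of the fan, `G` may be infinite.
-/

open Set Function

theorem inter_eq_singleton_of_subset {α : Type*} {s t u : Set α} {a : α} (hst : s ∩ t = {a})
    (hus : u ⊆ s) (ha : a ∈ u) : u ∩ t = {a} :=
  Subset.antisymm (hst ▸ inter_subset_inter_left t hus)
    (singleton_subset_iff.mpr ⟨ha, (hst.symm.subset rfl).2⟩)

theorem pairwise_fin_cons {α : Type*} (r : α → α → Prop) [Std.Symm r] {n : ℕ} {a : α}
    {f : Fin n → α} (ha : ∀ i, r a (f i)) (hf : Pairwise fun i j ↦ r (f i) (f j)) :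
    Pairwise fun i j : Fin (n + 1) ↦
      r ((Fin.cons a f : Fin (n + 1) → α) i) ((Fin.cons a f : Fin (n + 1) → α) j) := by
  intro i j hij
  cases i using Fin.cases <;> cases j using Fin.cases
  · exact absurd rfl hij
  · exact ha _
  · exact Std.Symm.symm _ _ (ha _)
  · exact hf (ne_of_apply_ne Fin.succ hij)

theorem cons_update_comp_swap {α : Type*} {n : ℕ} (f : Fin n → α) (i : Fin n) (c d : α) :
    (Fin.cons c (update f i d) : Fin (n + 1) → α) ∘ Equiv.swap 0 i.succ =
      Fin.cons d (update f i c) := by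
  ext j
  cases j using Fin.cases with
  | zero => simp
  | succ j =>
    obtain rfl | hj := eq_or_ne j i
    · simp only [comp_apply, Equiv.swap_apply_right, Fin.cons_zero, Fin.cons_succ, update_self]
    · simp [hj, Equiv.swap_apply_of_ne_of_ne (Fin.succ_ne_zero j) ((Fin.succ_injective n).ne hj)]

section PathOn

variable {V : Type*} {G : SimpleGraph V} {u v w : V} {P Q : Set V}

/-- `P` is the vertex set of a path in `G` from `u` to `v`. Recording paths by their vertex sets
avoids walks whose endpoints depend on an index. -/
def IsPathOn (G : SimpleGraph V) (u v : V) (P : Set V) : Prop :=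
  ∃ p : G.Walk u v, p.IsPath ∧ {z | z ∈ p.support} = P

namespace IsPathOn

theorem refl (G : SimpleGraph V) (u : V) : IsPathOn G u u {u} :=
  ⟨.nil, .nil, by simp⟩

theorem left_mem (h : IsPathOn G u v P) : u ∈ P := by
  obtain ⟨p, -, rfl⟩ := h
  exact p.start_mem_support

theorem right_mem (h : IsPathOn G u v P) : v ∈ P := by
  obtain ⟨p, -, rfl⟩ := h
  exact p.end_mem_support

theorem finite (h : IsPathOn G u v P) : P.Finite := by
  obtain ⟨p, -, rfl⟩ := h
  exact p.support.finite_toSet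

theorem union (hP : IsPathOn G u v P) (hQ : IsPathOn G v w Q) (hPQ : P ∩ Q ⊆ {v}) :
    IsPathOn G u w (P ∪ Q) := by
  obtain ⟨p, hp, rfl⟩ := hP
  obtain ⟨q, hq, rfl⟩ := hQ
  refine ⟨p.append q, .mk' ?_, by ext; simp [Walk.mem_support_append_iff]⟩
  have hq' := hq.support_nodup
  rw [← q.cons_tail_support, List.nodup_cons] at hq'
  rw [Walk.support_append, List.nodup_append']
  refine ⟨hp.support_nodup, hq'.2, fun z hzp hzq ↦ ?_⟩
  obtain rfl : z = v := hPQ ⟨hzp, List.mem_of_mem_tail hzq⟩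
  exact hq'.1 hzq

theorem exists_split (h : IsPathOn G u w P) (hv : v ∈ P) :
    ∃ P₁ P₂, IsPathOn G u v P₁ ∧ IsPathOn G v w P₂ ∧ P₁ ∪ P₂ = P ∧ P₁ ∩ P₂ = {v} := by
  obtain ⟨p, hp, rfl⟩ := h
  obtain ⟨q, r, hq, hr, rfl⟩ := hp.mem_support_iff_exists_append.mp hv
  refine ⟨_, _, ⟨q, hq, rfl⟩, ⟨r, hr, rfl⟩, by ext; simp [Walk.mem_support_append_iff], ?_⟩
  refine Subset.antisymm (fun z hz ↦ ?_) (by simp)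
  by_contra hne
  exact hp.ne_of_mem_support_of_append hne hz.1 hz.2 rfl

end IsPathOn

theorem exists_isPathOn_subset_support (p : G.Walk u v) :
    ∃ P ⊆ {z | z ∈ p.support}, IsPathOn G u v P := by
  classical
  exact ⟨_, fun _ hz ↦ p.support_bypass_subset_support hz, p.bypass, p.bypass_isPath, rfl⟩

theorem exists_isPathOn_inter_eq_singleton {A B : Set V} (hP : IsPathOn G u v P) (hu : u ∈ A)
    (hv : v ∈ B) :
    ∃ a b, ∃ R ⊆ P, IsPathOn G a b R ∧ R ∩ A = {a} ∧ R ∩ B = {b} := by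
  let IsCandidate (R : Set V) : Prop := R ⊆ P ∧ ∃ a ∈ A, ∃ b ∈ B, IsPathOn G a b R
  obtain ⟨R, ⟨hRP, a, ha, b, hb, hR⟩, hmin⟩ := exists_minimalFor_of_wellFoundedLT IsCandidate
    ncard ⟨P, Subset.rfl, u, hu, v, hv, hP⟩
  have eq_of_subset {R' : Set V} (hR' : IsCandidate R') (hsub : R' ⊆ R) : R' = R :=
    eq_of_subset_of_ncard_le hsub (hmin hR' (ncard_le_ncard hsub hR.finite)) hR.finite
  refine ⟨a, b, R, hRP, hR, ?_, ?_⟩ <;>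
    refine Subset.antisymm (fun z ⟨hzR, hz⟩ ↦ ?_) (by simp [*, hR.left_mem, hR.right_mem])
  all_goals obtain ⟨R₁, R₂, hR₁, hR₂, hunion, hinter⟩ := hR.exists_split hzR
  · have hR₂R : R₂ = R := eq_of_subset ⟨by grind, z, hz, b, hb, hR₂⟩ (by grind)
    have ha_inter : a ∈ R₁ ∩ R₂ := ⟨hR₁.left_mem, hR₂R ▸ hR.left_mem⟩
    grind
  · have hR₁R : R₁ = R := eq_of_subset ⟨by grind, a, ha, z, hz, hR₁⟩ (by grind)
    have hb_inter : b ∈ R₁ ∩ R₂ := ⟨hR₁R ▸ hR.right_mem, hR₂.right_mem⟩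
    grind

end PathOn

section Fan

variable {V ι κ : Type*} {G : SimpleGraph V} {x : V} {B B' : Set V}

/-- The sets `s i` are the vertex sets of paths from `x` to the vertices `e i` of `B` which meet `B`
only in their ends and one another only in `x`. -/
structure IsFan (G : SimpleGraph V) (x : V) (B : Set V) (e : ι → V) (s : ι → Set V) : Prop where
  isPathOn : ∀ i, IsPathOn G x (e i) (s i)
  inter_eq : ∀ i, s i ∩ B = {e i}
  pairwise : Pairwise fun i j ↦ s i ∩ s j ⊆ {x}

namespace IsFan

variable {e e' : ι → V} {s q : ι → Set V}

theorem end_mem_target (h : IsFan G x B e s) (i : ι) : e i ∈ B :=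
  ((h.inter_eq i).symm.subset rfl).2

theorem injective (h : IsFan G x B e s) (hx : x ∉ B) : Injective e := by
  intro i j hij
  by_contra hne
  have hend : e i = x := h.pairwise hne ⟨(h.isPathOn i).right_mem, hij ▸ (h.isPathOn j).right_mem⟩
  exact hx (hend ▸ h.end_mem_target i)

theorem comp_injective (h : IsFan G x B e s) {f : κ → ι} (hf : Injective f) :
    IsFan G x B (e ∘ f) (s ∘ f) :=
  ⟨fun i ↦ h.isPathOn (f i), fun i ↦ h.inter_eq (f i), fun _ _ hij ↦ h.pairwise (hf.ne hij)⟩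

theorem cons {n : ℕ} {e : Fin n → V} {s : Fin n → Set V} {b : V} {R : Set V}
    (h : IsFan G x B e s) (hR : IsPathOn G x b R) (hRB : R ∩ B = {b})
    (hRs : ∀ i, R ∩ s i ⊆ {x}) :
    IsFan G x B (Fin.cons b e : Fin (n + 1) → V) (Fin.cons R s : Fin (n + 1) → Set V) where
  isPathOn := Fin.cases hR h.isPathOn
  inter_eq := Fin.cases hRB h.inter_eq
  pairwise :=
    have : Std.Symm fun P Q : Set V ↦ P ∩ Q ⊆ {x} := ⟨fun P Q hPQ ↦ inter_comm P Q ▸ hPQ⟩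
    pairwise_fin_cons (fun P Q : Set V ↦ P ∩ Q ⊆ {x}) hRs h.pairwise

theorem update_end [DecidableEq ι] {i : ι} {a : V} {P : Set V} (h : IsFan G x B e s)
    (hP : IsPathOn G x a P) (hPs : P ⊆ s i) (hPB : P ∩ B' = {a})
    (hB' : ∀ j ≠ i, s j ∩ B' = {e j}) : IsFan G x B' (update e i a) (update s i P) where
  isPathOn j := by
    obtain rfl | hj := eq_or_ne j i
    · simpa using hP
    · simpa [hj] using h.isPathOn j
  inter_eq j := by
    obtain rfl | hj := eq_or_ne j i
    · simpa using hPB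
    · simpa [hj] using hB' j hj
  pairwise j k hjk := by
    have hsub (l : ι) : update s i P l ⊆ s l := by
      obtain rfl | hl := eq_or_ne l i
      · simpa using hPs
      · simp [hl]
    exact (inter_subset_inter (hsub j) (hsub k)).trans (h.pairwise hjk)

theorem truncate [DecidableEq ι] {i : ι} {a : V} {P₁ P₂ R : Set V} (h : IsFan G x B e s)
    (hP₁ : IsPathOn G x a P₁) (hP₂ : IsPathOn G a (e i) P₂) (hunion : P₁ ∪ P₂ = s i)
    (hinter : P₁ ∩ P₂ = {a}) (hxP₂ : x ∉ P₂) (hR : R ∩ ⋃ j, s j ⊆ {a}) :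
    IsFan G x (B ∪ (P₂ ∪ R)) (update e i a) (update s i P₁) := by
  have eq_a {j : ι} {z : V} (hzR : z ∈ R) (hz : z ∈ s j) : z = a :=
    hR ⟨hzR, mem_iUnion_of_mem j hz⟩
  have hP₁s : P₁ ⊆ s i := hunion ▸ subset_union_left
  have hP₂s : P₂ ⊆ s i := hunion ▸ subset_union_right
  refine h.update_end hP₁ hP₁s (Subset.antisymm ?_ ?_) fun j hj ↦ Subset.antisymm ?_ ?_
  · rintro z ⟨hz₁, hzB | hz₂ | hzR⟩
    · obtain rfl : z = e i := (h.inter_eq i).subset ⟨hP₁s hz₁, hzB⟩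
      exact hinter.subset ⟨hz₁, hP₂.right_mem⟩
    · exact hinter.subset ⟨hz₁, hz₂⟩
    · exact eq_a hzR (hP₁s hz₁)
  · exact singleton_subset_iff.mpr ⟨hP₁.right_mem, .inr (.inl hP₂.left_mem)⟩
  · have notMem_P₂ {z : V} (hz : z ∈ s j) (hz₂ : z ∈ P₂) : False :=
      hxP₂ (h.pairwise hj ⟨hz, hP₂s hz₂⟩ ▸ hz₂)
    rintro z ⟨hz, hzB | hz₂ | hzR⟩
    · exact (h.inter_eq j).subset ⟨hz, hzB⟩
    · exact (notMem_P₂ hz hz₂).elim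
    · obtain rfl := eq_a hzR hz
      exact (notMem_P₂ hz hP₂.left_mem).elim
  · exact singleton_subset_iff.mpr ⟨(h.isPathOn j).right_mem, .inl (h.end_mem_target j)⟩

theorem extend (h : IsFan G x B' e s) (hBB' : B ⊆ B')
    (hq : ∀ i, IsPathOn G (e i) (e' i) (q i)) (hqB' : ∀ i, q i ⊆ B')
    (hqB : ∀ i, q i ∩ B = {e' i}) (hdisj : Pairwise (Disjoint on q)) :
    IsFan G x B e' fun i ↦ s i ∪ q i := by
  have eq_end {i : ι} {z : V} (hs : z ∈ s i) (hz : z ∈ B') : z = e i :=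
    (h.inter_eq i).subset ⟨hs, hz⟩
  have index_eq {i j : ι} {z : V} (hs : z ∈ s i) (hz : z ∈ q j) : i = j := by
    by_contra hij
    have hzi : z ∈ q i := eq_end hs (hqB' j hz) ▸ (hq i).left_mem
    exact disjoint_left.mp (hdisj hij) hzi hz
  refine ⟨fun i ↦ (h.isPathOn i).union (hq i) fun z hz ↦ eq_end hz.1 (hqB' i hz.2), fun i ↦ ?_,
    fun i j hij ↦ ?_⟩
  · have hsq : s i ∩ B ⊆ q i := fun z hz ↦ eq_end hz.1 (hBB' hz.2) ▸ (hq i).left_mem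
    rw [← hqB i]
    grind
  · rintro z ⟨hsi | hqi, hsj | hqj⟩
    · exact h.pairwise hij ⟨hsi, hsj⟩
    · exact absurd (index_eq hsi hqj) hij
    · exact absurd (index_eq hsj hqi).symm hij
    · exact absurd hqj (disjoint_left.mp (hdisj hij) hqi)

end IsFan

end Fan

section Augment

variable {V : Type*} {G : SimpleGraph V} {x : V} {B : Set V} {n : ℕ} {e : Fin n → V}
  {s : Fin n → Set V}

/-- Every walk from `x` to a vertex of `B` meets `C`; nothing prevents `x ∈ C`. -/
def Separates (G : SimpleGraph V) (C : Set V) (x : V) (B : Set V) : Prop :=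
  ∀ b ∈ B, ∀ p : G.Walk x b, ∃ z ∈ p.support, z ∈ C

theorem Separates.mono {B' C : Set V} (h : Separates G C x B') (hB : B ⊆ B') :
    Separates G C x B :=
  fun b hb ↦ h b (hB hb)

namespace IsFan

theorem exists_swap {y a : V} {i : Fin n} {s : Fin (n + 1) → Set V}
    (h : IsFan G x B (Fin.cons y (update e i a)) s) :
    ∃ s', IsFan G x B (Fin.cons a (update e i y) : Fin (n + 1) → V) s' :=
  ⟨_, cons_update_comp_swap e i y a ▸ h.comp_injective (Equiv.swap 0 i.succ).injective⟩

theorem exists_cons_of_disjoint {B' Q₀ Q₁ : Set V} {y y' a : V} {i : Fin n}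
    {s : Fin (n + 1) → Set V} (h : IsFan G x B' (Fin.cons y (update e i a)) s) (hBB' : B ⊆ B')
    (he : Injective e) (heB : ∀ j, e j ∈ B) (hy' : y' ∉ range e)
    (hQ₀ : IsPathOn G y y' Q₀) (hQ₀B' : Q₀ ⊆ B') (hQ₀B : Q₀ ∩ B = {y'})
    (hQ₁ : IsPathOn G a (e i) Q₁) (hQ₁B' : Q₁ ⊆ B') (hQ₁B : Q₁ ∩ B = {e i})
    (hQ : Disjoint Q₀ Q₁) :
    ∃ s', IsFan G x B (Fin.cons y' e : Fin (n + 1) → V) s' := by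
  let q : Fin n → Set V := update (fun j ↦ {e j}) i Q₁
  have hqB (j : Fin n) : q j ∩ B = {e j} := by
    obtain rfl | hj := eq_or_ne j i
    · simpa [q] using hQ₁B
    · simpa [q, hj] using heB j
  have hqB' (j : Fin n) : q j ⊆ B' := by
    obtain rfl | hj := eq_or_ne j i
    · simpa [q] using hQ₁B'
    · simpa [q, hj] using hBB' (heB j)
  have hq (j : Fin n) : IsPathOn G (update e i a j) (e j) (q j) := by
    obtain rfl | hj := eq_or_ne j i
    · simpa [q] using hQ₁
    · simpa [q, hj] using IsPathOn.refl G (e j)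
  have hQ₀q (j : Fin n) : Disjoint Q₀ (q j) := by
    obtain rfl | hj := eq_or_ne j i
    · simpa [q] using hQ
    · have hend : e j ∉ Q₀ := fun hjQ₀ ↦ hy' ⟨j, hQ₀B.subset ⟨hjQ₀, heB j⟩⟩
      simpa [q, hj] using hend
  have disjoint_of_ne {j l : Fin n} (hj : j ≠ i) (hjl : j ≠ l) : Disjoint (q j) (q l) := by
    have hend : e j ∉ q l := fun hjl' ↦ hjl (he ((hqB l).subset ⟨hjl', heB j⟩))
    simpa [q, hj] using hend
  have hqq : Pairwise (Disjoint on q) := by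
    intro j l hjl
    obtain rfl | hj := eq_or_ne j i
    · exact (disjoint_of_ne hjl.symm hjl.symm).symm
    · exact disjoint_of_ne hj hjl
  exact ⟨_, h.extend hBB' (Fin.cases hQ₀ hq) (Fin.cases hQ₀B' hqB') (Fin.cases hQ₀B hqB)
    (pairwise_fin_cons Disjoint hQ₀q hqq)⟩

/-- The inductive step when the connecting path `R` leaves the fan at `a ≠ x`: here `P₂` is the
rest of the fan path through `a`, and `y` is the end added in the enlarged target. -/
theorem exists_cons_of_update_end {P₂ R : Set V} {y a b : V} {i : Fin n}
    {s : Fin (n + 1) → Set V} (h : IsFan G x (B ∪ (P₂ ∪ R)) (Fin.cons y (update e i a)) s)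
    (hx : x ∉ B ∪ (P₂ ∪ R)) (he : Injective e) (heB : ∀ j, e j ∈ B)
    (hP₂ : IsPathOn G a (e i) P₂) (hP₂B : P₂ ∩ B = {e i})
    (hR : IsPathOn G a b R) (hRB : R ∩ B = {b}) (hRe : Disjoint R (range e))
    (hP₂R : P₂ ∩ R = {a}) :
    ∃ y' s', IsFan G x B (Fin.cons y' e : Fin (n + 1) → V) s' := by
  have hya : y ≠ a := by simpa using (h.injective hx).ne (Fin.succ_ne_zero i).symm
  have hb : b ∉ range e := disjoint_left.mp hRe hR.right_mem
  by_cases hyP₂ : y ∈ P₂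
  · obtain ⟨P₃, P₄, hP₃, hP₄, rfl, hinter⟩ := hP₂.exists_split hyP₂
    obtain ⟨s', h'⟩ := h.exists_swap
    have haP₄ : a ∉ P₄ := fun ha ↦ hya (hinter.subset ⟨hP₃.left_mem, ha⟩).symm
    have hP₄B : P₄ ∩ B = {e i} :=
      inter_eq_singleton_of_subset hP₂B subset_union_right hP₄.right_mem
    have hdisj : Disjoint R P₄ := disjoint_left.mpr fun z hzR hzP₄ ↦
      haP₄ (hP₂R.subset ⟨.inr hzP₄, hzR⟩ ▸ hzP₄)
    exact ⟨b, h'.exists_cons_of_disjoint subset_union_left he heB hb hR (by grind) hRB hP₄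
      (by grind) hP₄B hdisj⟩
  by_cases hyR : y ∈ R
  · obtain ⟨R₁, R₂, hR₁, hR₂, rfl, hinter⟩ := hR.exists_split hyR
    have haR₂ : a ∉ R₂ := fun ha ↦ hya (hinter.subset ⟨hR₁.left_mem, ha⟩).symm
    have hR₂B : R₂ ∩ B = {b} :=
      inter_eq_singleton_of_subset hRB subset_union_right hR₂.right_mem
    have hdisj : Disjoint R₂ P₂ := disjoint_left.mpr fun z hzR₂ hzP₂ ↦
      haR₂ (hP₂R.subset ⟨hzP₂, .inr hzR₂⟩ ▸ hzR₂)
    exact ⟨b, h.exists_cons_of_disjoint subset_union_left he heB hb hR₂ (by grind) hR₂B hP₂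
      (by grind) hP₂B hdisj⟩
  · have hyB : y ∈ B := (h.end_mem_target 0).resolve_right (not_or_intro hyP₂ hyR)
    have hye : y ∉ range e := by
      rintro ⟨j, rfl⟩
      obtain rfl | hj := eq_or_ne j i
      · exact hyP₂ hP₂.right_mem
      · exact Fin.succ_ne_zero j (h.injective hx (by simp [hj]))
    exact ⟨y, h.exists_cons_of_disjoint subset_union_left he heB hye (.refl G y) (by grind)
      (by grind) hP₂ (by grind) hP₂B (disjoint_singleton_left.mpr hyP₂)⟩

theorem exists_connecting_isPathOn (h : IsFan G x B e s) (hx : x ∉ B)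
    (hsep : ∀ C, x ∉ C → Separates G C x B → n < C.encard) :
    ∃ a b R, IsPathOn G a b R ∧ R ∩ insert x (⋃ i, s i) = {a} ∧ R ∩ B = {b} ∧
      Disjoint R (range e) := by
  have hxe : x ∉ range e := by
    rintro ⟨i, rfl⟩
    exact hx (h.end_mem_target i)
  have hcard : (range e).encard ≤ n := by
    simpa [image_univ] using encard_image_le e univ
  obtain ⟨b, hb, p, hp⟩ : ∃ b ∈ B, ∃ p : G.Walk x b, ∀ z ∈ p.support, z ∉ range e := by
    by_contra! hC
    exact (hsep _ hxe hC).not_ge hcard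
  obtain ⟨P, hPp, hP⟩ := exists_isPathOn_subset_support p
  obtain ⟨a, b, R, hRP, hR, hRA, hRB⟩ :=
    exists_isPathOn_inter_eq_singleton (A := insert x (⋃ i, s i)) hP (mem_insert _ _) hb
  exact ⟨a, b, R, hR, hRA, hRB, disjoint_left.mpr fun z hz ↦ hp z (hPp (hRP hz))⟩

theorem exists_cons (h : IsFan G x B e s) (hx : x ∉ B)
    (hsep : ∀ C, x ∉ C → Separates G C x B → n < C.encard) :
    ∃ y s', IsFan G x B (Fin.cons y e : Fin (n + 1) → V) s' := by
  induction hm : ((⋃ i, s i) \ B).ncard using Nat.strong_induction_on generalizing B e s with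
  | _ m ih =>
  subst hm
  obtain ⟨a, b, R, hR, hRA, hRB, hRe⟩ := h.exists_connecting_isPathOn hx hsep
  have hRs : R ∩ ⋃ j, s j ⊆ {a} := fun z hz ↦ hRA.subset ⟨hz.1, .inr hz.2⟩
  obtain rfl | hax := eq_or_ne a x
  · exact ⟨b, _, h.cons hR hRB fun i z hz ↦ hRs ⟨hz.1, mem_iUnion_of_mem i hz.2⟩⟩
  obtain ⟨i, hai⟩ : ∃ i, a ∈ s i :=
    mem_iUnion.mp ((hRA.symm.subset rfl).2.resolve_left hax)
  obtain ⟨P₁, P₂, hP₁, hP₂, hunion, hinter⟩ := (h.isPathOn i).exists_split hai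
  have hP₁s : P₁ ⊆ s i := hunion ▸ subset_union_left
  have hP₂s : P₂ ⊆ s i := hunion ▸ subset_union_right
  have hxP₂ : x ∉ P₂ := fun hxP₂ ↦ hax (hinter.subset ⟨hP₁.left_mem, hxP₂⟩).symm
  have hxR : x ∉ R := fun hxR ↦ hax (hRA.subset ⟨hxR, mem_insert x _⟩).symm
  have hx' : x ∉ B ∪ (P₂ ∪ R) := by simp [hx, hxP₂, hxR]
  have haB : a ∉ B := fun haB ↦
    disjoint_left.mp hRe hR.left_mem ⟨i, ((h.inter_eq i).subset ⟨hai, haB⟩).symm⟩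
  have hlt : ((⋃ j, update s i P₁ j) \ (B ∪ (P₂ ∪ R))).ncard < ((⋃ j, s j) \ B).ncard := by
    refine ncard_lt_ncard ((ssubset_iff_of_subset ?_).mpr ⟨a, ?_, ?_⟩)
      ((finite_iUnion fun j ↦ (h.isPathOn j).finite).sdiff)
    · exact sdiff_subset_sdiff (iUnion_mono (update_le_self_iff.mpr hP₁s)) subset_union_left
    · exact ⟨mem_iUnion_of_mem i hai, haB⟩
    · exact fun ha ↦ ha.2 (.inr (.inl hP₂.left_mem))
  obtain ⟨y, s', h'⟩ := ih _ hlt (h.truncate hP₁ hP₂ hunion hinter hxP₂ hRs) hx'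
    (fun C hxC hC ↦ hsep C hxC (hC.mono subset_union_left)) rfl
  have hP₂B := inter_eq_singleton_of_subset (h.inter_eq i) hP₂s hP₂.right_mem
  have hP₂R : P₂ ∩ R = {a} := inter_eq_singleton_of_subset (inter_comm R _ ▸ hRA)
    (hP₂s.trans ((subset_iUnion s i).trans (subset_insert x _))) hP₂.left_mem
  exact h'.exists_cons_of_update_end hx' (h.injective hx) h.end_mem_target hP₂ hP₂B hR hRB hRe hP₂R

end IsFan

theorem exists_isFan {k : ℕ} (hx : x ∉ B)
    (hsep : ∀ C, x ∉ C → Separates G C x B → k ≤ C.encard) :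
    ∃ (e : Fin k → V) (s : Fin k → Set V), IsFan G x B e s := by
  induction k with
  | zero => exact ⟨Fin.elim0, Fin.elim0, fun i ↦ i.elim0, fun i ↦ i.elim0, fun i ↦ i.elim0⟩
  | succ k ih =>
    have hlt (C : Set V) (hxC : x ∉ C) (hC : Separates G C x B) : k < C.encard :=
      (ENat.add_one_le_iff (ENat.natCast_ne_top k)).mp (by exact_mod_cast hsep C hxC hC)
    obtain ⟨e, s, h⟩ := ih fun C hxC hC ↦ (hlt C hxC hC).le
    obtain ⟨y, s', h'⟩ := h.exists_cons hx hlt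
    exact ⟨_, s', h'⟩

theorem IsFan.hasFan {k : ℕ} {e : Fin k → V} {s : Fin k → Set V} (h : IsFan G x B e s)
    (hx : x ∉ B) : HasFan G x B k := by
  choose p hp hps using h.isPathOn
  refine ⟨e, p, h.injective hx, hp, h.end_mem_target, fun i j hij z hzi hzj ↦ ?_⟩
  exact h.pairwise hij ⟨(hps i).subset hzi, (hps j).subset hzj⟩

end Augment

section Component

variable {V : Type*} {G : SimpleGraph V} {x : V} {C S : Set V}

/-- The vertex set of the connected component of `G - C` containing `x`, for `x ∉ C`; it is empty
if `x ∈ C`. -/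
def componentAvoiding (G : SimpleGraph V) (C : Set V) (x : V) : Set V :=
  {y | y ∉ C ∧ ∃ w : G.Walk x y, ∀ z ∈ w.support, z ∉ C}

theorem setNbhd_componentAvoiding_subset (G : SimpleGraph V) (C : Set V) (x : V) :
    setNbhd G (componentAvoiding G C x) ⊆ C := by
  rintro u ⟨hu, v, ⟨-, w, hw⟩, hvu⟩
  by_contra huC
  refine hu ⟨huC, w.concat hvu, fun z hz ↦ ?_⟩
  obtain hz | rfl : z ∈ w.support ∨ z = u := by simpa [Walk.support_concat] using hz
  exacts [hw z hz, huC]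

theorem Separates.inter_componentAvoiding_eq_empty (h : Separates G C x S) :
    S ∩ componentAvoiding G C x = ∅ := by
  refine eq_empty_iff_forall_notMem.mpr ?_
  rintro y ⟨hyS, -, w, hw⟩
  obtain ⟨z, hz, hzC⟩ := h y hyS w
  exact hw z hz hzC

end Component

theorem stmt_2_general {V : Type*} (G : SimpleGraph V) (x : V) (S : Set V) (k : ℕ) (hxS : x ∉ S)
    (h : ¬ HasFan G x S k) :
    ∃ C X : Set V, x ∉ C ∧ C.encard < k ∧
      X = {y | y ∉ C ∧ ∃ w : G.Walk x y, ∀ z ∈ w.support, z ∉ C} ∧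
      S ∩ X = ∅ ∧ setNbhd G X ⊆ C ∧ (setNbhd G X).encard < k := by
  obtain ⟨C, hxC, hC, hCk⟩ : ∃ C, x ∉ C ∧ Separates G C x S ∧ C.encard < k := by
    by_contra! hsep
    obtain ⟨e, s, hfan⟩ := exists_isFan hxS hsep
    exact h (hfan.hasFan hxS)
  have hN := setNbhd_componentAvoiding_subset G C x
  exact ⟨C, componentAvoiding G C x, hxC, hCk, rfl, hC.inter_componentAvoiding_eq_empty, hN,
    (encard_le_encard hN).trans_lt hCk⟩

theorem stmt_2 {V : Type*} [Fintype V] (G : SimpleGraph V) (x : V) (S : Set V)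
    (k : ℕ) (hxS : x ∉ S) (h : ¬ HasFan G x S k) :
    ∃ C X : Set V, x ∉ C ∧ C.ncard < k ∧
      X = {y | y ∉ C ∧ ∃ w : G.Walk x y, ∀ z ∈ w.support, z ∉ C} ∧
      S ∩ X = ∅ ∧ setNbhd G X ⊆ C ∧ (setNbhd G X).ncard < k := by
  have encard_lt_iff (A : Set V) : A.encard < k ↔ A.ncard < k := by
    rw [← (toFinite A).cast_ncard_eq, Nat.cast_lt]
  simpa only [encard_lt_iff] using stmt_2_general G x S k hxS h
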